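/- arXiv:1706.01792 — 2 statements merged into one kernel-verified Lean document; each statement's English description precedes it below -/
import Mathlib

section
/- Let η ∈ ℝ^{mN}, Λ ∈ ℝ^{mN×k}, Θ ∈ ℝ^{mN×n}, let φ ≥ 0 and U ∈ ℝ. Then the following are equivalent: (a) for every ν ∈ {0,1}^k and every e ∈ ℝ^n with ‖e‖_∞ ≤ φ, one has ‖η + Λν + Θe‖_∞ ≤ U; (b) for every row index i ∈ {1,…,mN}, |η_i + (1/2)·Σ_{j=1}^k Λ_{ij}| + (1/2)·Σ_{j=1}^k |Λ_{ij}| + φ·Σ_{j=1}^n |Θ_{ij}| ≤ U. -/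
/-!
Fix a row. Writing `ν j = 1/2 + (ν j - 1/2)` with `|ν j - 1/2| = 1/2`, the row entry is the centre
`η i + (1/2) ∑ Λ i j` plus two perturbations bounded by `(1/2) ∑ |Λ i j|` and `φ ∑ |Θ i j|`; the
triangle inequality gives (b) → (a). Conversely, choosing `ν` and `e` entrywise by the signs of the
row's coefficients attains both bounds simultaneously, with either common sign, so taking the sign
of the centre gives (a) → (b).
-/

open Finset

/-- Let `η ∈ ℝ^{mN}`, `Λ ∈ ℝ^{mN×k}`, `Θ ∈ ℝ^{mN×n}`, `φ ≥ 0`, `U ∈ ℝ`.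
The following are equivalent:
(a) for every `ν ∈ {0,1}^k` and every `e` with `‖e‖_∞ ≤ φ` (i.e. `|e j| ≤ φ` for all `j`),
    every component of `η + Λν + Θe` has absolute value at most `U`
    (i.e. `‖η + Λν + Θe‖_∞ ≤ U`);
(b) for every row `i`,
    `|η_i + (1/2)·Σ_j Λ_{ij}| + (1/2)·Σ_j |Λ_{ij}| + φ·Σ_j |Θ_{ij}| ≤ U`. -/
theorem hard_input_constraint_reformulation (m N k n : ℕ)
    (η : Fin (m * N) → ℝ) (Λ : Matrix (Fin (m * N)) (Fin k) ℝ)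
    (Θ : Matrix (Fin (m * N)) (Fin n) ℝ) (φ U : ℝ) (hφ : 0 ≤ φ) :
    (∀ ν : Fin k → ℝ, (∀ j, ν j = 0 ∨ ν j = 1) →
      ∀ e : Fin n → ℝ, (∀ j, |e j| ≤ φ) →
        ∀ i, |η i + ∑ j, Λ i j * ν j + ∑ j, Θ i j * e j| ≤ U)
    ↔ (∀ i, |η i + (1 / 2) * ∑ j, Λ i j| + (1 / 2) * ∑ j, |Λ i j|
          + φ * ∑ j, |Θ i j| ≤ U) := by
  constructor
  · intro h i
    -- Both perturbations maximal: the largest value of row `i` is at most `U`.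
    have h1 := h (fun j => if 0 ≤ Λ i j then 1 else 0) (fun j => by split_ifs <;> simp)
      (fun j => if 0 ≤ Θ i j then φ else -φ)
      (fun j => by split_ifs <;> simp [abs_of_nonneg hφ]) i
    -- Both perturbations minimal: the smallest value of row `i` is at least `-U`.
    have h2 := h (fun j => if 0 ≤ Λ i j then 0 else 1) (fun j => by split_ifs <;> simp)
      (fun j => if 0 ≤ Θ i j then -φ else φ)
      (fun j => by split_ifs <;> simp [abs_of_nonneg hφ]) i
    have a1 : ∑ j, Λ i j * (if 0 ≤ Λ i j then (1 : ℝ) else 0)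
        = (1 / 2) * ∑ j, Λ i j + (1 / 2) * ∑ j, |Λ i j| := by
      rw [mul_sum, mul_sum, ← sum_add_distrib]
      refine sum_congr rfl fun j _ => ?_
      split_ifs with hj
      · rw [abs_of_nonneg hj]; ring
      · rw [abs_of_neg (not_le.mp hj)]; ring
    have a2 : ∑ j, Λ i j * (if 0 ≤ Λ i j then (0 : ℝ) else 1)
        = (1 / 2) * ∑ j, Λ i j - (1 / 2) * ∑ j, |Λ i j| := by
      rw [mul_sum, mul_sum, ← sum_sub_distrib]
      refine sum_congr rfl fun j _ => ?_
      split_ifs with hj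
      · rw [abs_of_nonneg hj]; ring
      · rw [abs_of_neg (not_le.mp hj)]; ring
    have b1 : ∑ j, Θ i j * (if 0 ≤ Θ i j then φ else -φ) = φ * ∑ j, |Θ i j| := by
      rw [mul_sum]
      refine sum_congr rfl fun j _ => ?_
      split_ifs with hj
      · rw [abs_of_nonneg hj]; ring
      · rw [abs_of_neg (not_le.mp hj)]; ring
    have b2 : ∑ j, Θ i j * (if 0 ≤ Θ i j then -φ else φ) = -(φ * ∑ j, |Θ i j|) := by
      rw [mul_sum, ← sum_neg_distrib]
      refine sum_congr rfl fun j _ => ?_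
      split_ifs with hj
      · rw [abs_of_nonneg hj]; ring
      · rw [abs_of_neg (not_le.mp hj)]; ring
    rw [a1, b1] at h1
    rw [a2, b2] at h2
    have h1' := (abs_le.mp h1).2
    have h2' := (abs_le.mp h2).1
    rcases abs_cases (η i + (1 / 2) * ∑ j, Λ i j) with ⟨hc, _⟩ | ⟨hc, _⟩ <;> rw [hc] <;> linarith
  · intro h ν hν e he i
    have hΛ : |∑ j, Λ i j * (ν j - 1 / 2)| ≤ (1 / 2) * ∑ j, |Λ i j| := by
      rw [mul_sum]
      refine (abs_sum_le_sum_abs _ _).trans (sum_le_sum fun j _ => ?_)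
      have hj : |ν j - 1 / 2| = 1 / 2 := by
        rcases hν j with hj | hj <;> rw [hj] <;> norm_num [abs_of_pos]
      rw [abs_mul, hj, mul_comm]
    have hΘ : |∑ j, Θ i j * e j| ≤ φ * ∑ j, |Θ i j| := by
      rw [mul_sum]
      refine (abs_sum_le_sum_abs _ _).trans (sum_le_sum fun j _ => ?_)
      rw [abs_mul, mul_comm]
      exact mul_le_mul_of_nonneg_right (he j) (abs_nonneg _)
    have hsplit : ∑ j, Λ i j * ν j
        = (1 / 2) * ∑ j, Λ i j + ∑ j, Λ i j * (ν j - 1 / 2) := by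
      rw [mul_sum, ← sum_add_distrib]
      exact sum_congr rfl fun j _ => by ring
    rw [hsplit, ← add_assoc]
    exact (abs_add_three _ _ _).trans (by linarith [h i])
end

section
/- Let A ∈ ℝ^{d×d} be orthogonal (AᵀA = I_d), let κ ∈ ℕ, let R ∈ ℝ^{d×n} and P ∈ ℝ^{n×d} satisfy R P = I_d, and let r > 0, ζ > 0, U_max > 0 satisfy √d · ζ · ‖P‖ ≤ U_max, where ‖P‖ denotes the ℓ²→ℓ² operator norm of P (its largest singular value). Define sat_{r,ζ} : ℝ^d → ℝ^d componentwise by (sat_{r,ζ}(z))_j = z_j ζ / r if |z_j| ≤ r, = ζ if z_j > r, and = −ζ if z_j < −r. For x ∈ ℝ^d, set u := −P A^κ sat_{r,ζ}(x). Then: (i) ‖u‖_∞ ≤ U_max; (ii) (A^κ)ᵀ R u = −sat_{r,ζ}(x); and consequently (iii) for every j ∈ {1,…,d}, ((A^κ)ᵀ R u)_j ≤ −ζ whenever x_j ≥ r, and ((A^κ)ᵀ R u)_j ≥ ζ whenever x_j ≤ −r. -/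
/-!
Since `A ^ κ` is orthogonal and `R * P = 1`, applying `(A ^ κ)ᵀ R` to `u` undoes `P A ^ κ` and
leaves `-sat(x)`, whose entries equal `∓ζ` once `|x j| ≥ r`. For the input bound, each entry of
`u` is at most its Euclidean norm, which is at most `‖P‖ ‖A ^ κ sat(x)‖ = ‖P‖ ‖sat(x)‖`, and
`‖sat(x)‖ ≤ √d ζ` because every entry of `sat(x)` lies in `[-ζ, ζ]`.
-/

open Matrix

/-- The componentwise saturation function `sat_{r,ζ}`:
`(sat_{r,ζ}(z))_j = z_j ζ / r` if `|z_j| ≤ r`, `= ζ` if `z_j > r`, `= -ζ` otherwise. -/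
noncomputable def satFn (r ζ : ℝ) {d : ℕ} (z : Fin d → ℝ) : Fin d → ℝ :=
  fun j => if |z j| ≤ r then z j * ζ / r else if r < z j then ζ else -ζ

theorem abs_satFn_le {r ζ : ℝ} (hr : 0 < r) (hζ : 0 < ζ) {d : ℕ} (z : Fin d → ℝ) (j : Fin d) :
    |satFn r ζ z j| ≤ ζ := by
  unfold satFn
  split_ifs with h1 h2
  · rw [abs_div, abs_mul, abs_of_pos hr, abs_of_pos hζ, div_le_iff₀ hr, mul_comm ζ r]
    gcongr
  · rw [abs_of_pos hζ]
  · rw [abs_neg, abs_of_pos hζ]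

theorem satFn_of_le {r ζ : ℝ} (hr : 0 < r) {d : ℕ} {z : Fin d → ℝ} {j : Fin d}
    (h : r ≤ z j) : satFn r ζ z j = ζ := by
  unfold satFn
  split_ifs with h1 h2
  · have : z j = r := le_antisymm ((le_abs_self _).trans h1) h
    rw [this]
    field_simp
  · rfl
  · have : z j = r := le_antisymm (not_lt.mp h2) h
    exact absurd (by rw [this, abs_of_pos hr]) h1

theorem satFn_of_le_neg {r ζ : ℝ} (hr : 0 < r) {d : ℕ} {z : Fin d → ℝ} {j : Fin d}
    (h : z j ≤ -r) : satFn r ζ z j = -ζ := by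
  unfold satFn
  split_ifs with h1 h2
  · have : z j = -r := le_antisymm h (neg_le_of_abs_le h1)
    rw [this]
    field_simp
  · linarith
  · rfl

theorem transpose_pow_mul_pow {d : ℕ} {A : Matrix (Fin d) (Fin d) ℝ} (hA : Aᵀ * A = 1) (κ : ℕ) :
    (A ^ κ)ᵀ * A ^ κ = 1 := by
  have hc : Commute Aᵀ A := hA.trans (mul_eq_one_comm.mp hA).symm
  rw [transpose_pow, ← hc.mul_pow, hA, one_pow]

theorem norm_toLp_mulVec_of_orthogonal {d : ℕ} {Q : Matrix (Fin d) (Fin d) ℝ} (hQ : Qᵀ * Q = 1)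
    (v : Fin d → ℝ) : ‖WithLp.toLp 2 (Q *ᵥ v)‖ = ‖WithLp.toLp 2 v‖ := by
  have h : (Q *ᵥ v) ⬝ᵥ (Q *ᵥ v) = v ⬝ᵥ v := by
    rw [dotProduct_mulVec, ← mulVec_transpose, mulVec_mulVec, hQ, one_mulVec]
  simp only [dotProduct, ← pow_two] at h
  simp only [EuclideanSpace.norm_eq, Real.norm_eq_abs, sq_abs, h]

theorem norm_toLp_le_sqrt_mul {d : ℕ} {v : Fin d → ℝ} {c : ℝ} (hc : 0 ≤ c)
    (h : ∀ j, |v j| ≤ c) : ‖WithLp.toLp 2 v‖ ≤ Real.sqrt d * c := by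
  rw [EuclideanSpace.norm_eq]
  apply Real.sqrt_le_iff.mpr ⟨by positivity, ?_⟩
  rw [mul_pow, Real.sq_sqrt (Nat.cast_nonneg d)]
  calc ∑ i, ‖v i‖ ^ 2 ≤ ∑ _i : Fin d, c ^ 2 := by
        gcongr with i
        exact h i
    _ = d * c ^ 2 := by simp

/-- Let `A ∈ ℝ^{d×d}` be orthogonal, `κ ∈ ℕ`, `R ∈ ℝ^{d×n}` and
`P ∈ ℝ^{n×d}` with `R P = I`, and let `r, ζ, U_max > 0` satisfy
`√d · ζ · ‖P‖ ≤ U_max`, where `‖P‖` is the `ℓ² → ℓ²` operator norm of `P`.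
For `u := −P A^κ sat_{r,ζ}(x)`:
(i) `‖u‖_∞ ≤ U_max`;
(ii) `(A^κ)ᵀ R u = −sat_{r,ζ}(x)`;
(iii) for every `j`, `((A^κ)ᵀ R u)_j ≤ −ζ` whenever `x_j ≥ r`, and
`((A^κ)ᵀ R u)_j ≥ ζ` whenever `x_j ≤ −r`. -/
theorem saturated_drift_feasibility (d n : ℕ)
    (A : Matrix (Fin d) (Fin d) ℝ) (hA : Aᵀ * A = 1) (κ : ℕ)
    (R : Matrix (Fin d) (Fin n) ℝ) (P : Matrix (Fin n) (Fin d) ℝ) (hRP : R * P = 1)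
    (r ζ Umax : ℝ) (hr : 0 < r) (hζ : 0 < ζ) (hUmax : 0 < Umax)
    (hnorm : Real.sqrt d * ζ *
        ‖LinearMap.toContinuousLinearMap (Matrix.toEuclideanLin P)‖ ≤ Umax)
    (x : Fin d → ℝ)
    (u : Fin n → ℝ) (hu : u = -(P.mulVec ((A ^ κ).mulVec (satFn r ζ x)))) :
    (∀ j, |u j| ≤ Umax) ∧
    ((A ^ κ)ᵀ.mulVec (R.mulVec u) = -(satFn r ζ x)) ∧
    (∀ j, (r ≤ x j → ((A ^ κ)ᵀ.mulVec (R.mulVec u)) j ≤ -ζ) ∧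
          (x j ≤ -r → ζ ≤ ((A ^ κ)ᵀ.mulVec (R.mulVec u)) j)) := by
  have hQ := transpose_pow_mul_pow hA κ
  have hdrift : (A ^ κ)ᵀ.mulVec (R.mulVec u) = -(satFn r ζ x) := by
    rw [hu, mulVec_neg, mulVec_mulVec, hRP, one_mulVec, mulVec_neg, mulVec_mulVec, hQ, one_mulVec]
  refine ⟨fun j => ?_, hdrift, fun j => ⟨fun h => ?_, fun h => ?_⟩⟩
  · set w := (A ^ κ) *ᵥ satFn r ζ x with hw
    have hwn : ‖WithLp.toLp 2 w‖ ≤ Real.sqrt d * ζ := by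
      rw [hw, norm_toLp_mulVec_of_orthogonal hQ]
      exact norm_toLp_le_sqrt_mul hζ.le (abs_satFn_le hr hζ x)
    calc |u j| = ‖WithLp.toLp 2 (P *ᵥ w) j‖ := by simp [hu]
      _ ≤ ‖WithLp.toLp 2 (P *ᵥ w)‖ := PiLp.norm_apply_le _ j
      _ ≤ ‖LinearMap.toContinuousLinearMap (Matrix.toEuclideanLin P)‖ * ‖WithLp.toLp 2 w‖ :=
        (LinearMap.toContinuousLinearMap (Matrix.toEuclideanLin P)).le_opNorm (WithLp.toLp 2 w)
      _ ≤ ‖LinearMap.toContinuousLinearMap (Matrix.toEuclideanLin P)‖ * (Real.sqrt d * ζ) := by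
        gcongr
      _ ≤ Umax := by rwa [mul_comm]
  · rw [hdrift, Pi.neg_apply, satFn_of_le hr h]
  · rw [hdrift, Pi.neg_apply, satFn_of_le_neg hr h, neg_neg]
end
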